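/- Let k be a finite field with 4 elements. Then, up to GL₂(k)-equivalence, there are exactly three equivalence classes of irreducible binary cubic forms over k, i.e., of homogeneous polynomials of degree 3 in k[x,y] that are irreducible in the polynomial ring k[x,y]. -/

import Mathlib

/-!
Let `k` have 4 elements and let `w` be a root of `w² + w + 1`. Two facts about `k` drive the
argument: every nonzero element has cube `1`, and a binary cubic form, having degree at most
`#k`, is determined by its values on `k²`.

An irreducible cubic form `f` has no zero on `k² \ {0}` (`eval_ne_zero`), so it partitions these
15 vectors into three fibres, one for each nonzero value. Each fibre is stable under scaling by
cube roots of unity, so its size is divisible by 3 (`three_dvd_fiberCard`). Each size is also odd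
(`fiberCard_odd`): for nonzero `y`, the polynomial `1 + y/e + (y/e)²` is the indicator of `y = e`,
and `∑ f(v) = ∑ f(v)² = 0` over `v ∈ k²` by the lemma behind Chevalley-Warning. Hence the sizes
are 3, 3, 9 in some order.

Let `e` be the value taken 9 times. The two small fibres are punctured lines `k* u` and `k* v`,
with values `w e` and `w² e`. In the basis `u, v` the form takes its third value
`e = w e + w² e` off the axes, so it agrees everywhere with `w e x³ + w² e y³`
(`exists_subst_eq_rep`). These three normal forms are irreducible, and they are pairwise
inequivalent (`rep_injective`): a linear bijection of `k²` cannot map the 9 vectors off the axes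
into the remaining 7, so a substitution taking one normal form to another preserves `e`.
-/

open MvPolynomial

/-! ### Linear substitutions -/

/-- The linear substitution `f ↦ f(a₁₁x + a₁₂y, a₂₁x + a₂₂y)`, a right action of the matrices. -/
noncomputable def subst {k : Type*} [Field k] (A : Matrix (Fin 2) (Fin 2) k) :
    MvPolynomial (Fin 2) k →ₐ[k] MvPolynomial (Fin 2) k :=
  bind₁ (fun i => C (A i 0) * X 0 + C (A i 1) * X 1)

lemma card_vec {k : Type*} [Fintype k] (hk : Fintype.card k = 4) : Fintype.card (Fin 2 → k) = 16 := by
  simp [hk]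

section
variable {k : Type*} [Field k]

lemma subst_subst (A B : Matrix (Fin 2) (Fin 2) k) (f : MvPolynomial (Fin 2) k) :
    subst B (subst A f) = subst (A * B) f := by
  have h : (subst B).comp (subst A) = subst (A * B) := by
    apply MvPolynomial.algHom_ext
    intro i
    simp [subst, Matrix.mul_apply, Fin.sum_univ_two]
    ring
  exact DFunLike.congr_fun h f

lemma subst_one (f : MvPolynomial (Fin 2) k) : subst 1 f = f := by
  have h : subst (1 : Matrix (Fin 2) (Fin 2) k) = AlgHom.id k _ := by
    apply MvPolynomial.algHom_ext
    intro i
    fin_cases i <;> simp [subst]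
  exact DFunLike.congr_fun h f

lemma eval_subst (A : Matrix (Fin 2) (Fin 2) k) (f : MvPolynomial (Fin 2) k) (v : Fin 2 → k) :
    eval v (subst A f) = eval (A.mulVec v) f := by
  have h : (aeval v).comp (subst A) = (aeval (A.mulVec v) : MvPolynomial (Fin 2) k →ₐ[k] k) := by
    apply MvPolynomial.algHom_ext
    intro i
    fin_cases i <;> simp [subst]
  exact DFunLike.congr_fun h f

lemma isHomogeneous_subst (A : Matrix (Fin 2) (Fin 2) k) {f : MvPolynomial (Fin 2) k}
    (hf : f.IsHomogeneous 3) : (subst A f).IsHomogeneous 3 := by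
  have := hf.aeval (S := k) (fun i => C (A i 0) * X 0 + C (A i 1) * X 1 : Fin 2 → MvPolynomial (Fin 2) k)
    (n := 1) (fun i => (isHomogeneous_C_mul_X _ _).add (isHomogeneous_C_mul_X _ _))
  simpa [subst] using this

/-! ### Cubic forms and their zeros -/

lemma cubic_eq {f : MvPolynomial (Fin 2) k} (hf : f.IsHomogeneous 3) :
    ∃ a b c d : k, f = C a * X 0 ^ 3 + C b * X 0 ^ 2 * X 1 + C c * X 0 * X 1 ^ 2 + C d * X 1 ^ 3 := by
  have key : f = ∑ i ∈ Finset.range 4, monomial (Finsupp.single 0 i + Finsupp.single 1 (3 - i))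
      (coeff (Finsupp.single 0 i + Finsupp.single 1 (3 - i)) f) := by
    ext m
    rw [coeff_sum]
    simp only [coeff_monomial]
    by_cases hm : m.degree = 3
    · have h2 : m 0 + m 1 = 3 := by simpa [Finsupp.degree_eq_sum, Fin.sum_univ_two] using hm
      have h3 : Finsupp.single 0 (m 0) + Finsupp.single 1 (3 - m 0) = m := by
        ext j
        fin_cases j <;> simp
        omega
      rw [Finset.sum_eq_single (m 0)]
      · rw [h3, if_pos rfl]
      · intro i _ hi
        rw [if_neg]
        rintro rfl
        simp at hi
      · intro h
        simp at h
        omega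
    · rw [hf.coeff_eq_zero hm, Finset.sum_eq_zero]
      intro i hi
      rw [if_neg]
      rintro rfl
      apply hm
      rw [Finset.mem_range] at hi
      rw [map_add, Finsupp.degree_single, Finsupp.degree_single]
      omega
  generalize hc : (fun i => coeff (Finsupp.single 0 i + Finsupp.single 1 (3 - i)) f) = c at key
  have hc' : ∀ i, coeff (Finsupp.single 0 i + Finsupp.single 1 (3 - i)) f = c i :=
    fun i => congrFun hc i
  simp only [hc'] at key
  refine ⟨c 3, c 2, c 1, c 0, key.trans ?_⟩
  simp [Finset.sum_range_succ, monomial_eq, Finsupp.prod_fintype, Fin.prod_univ_two]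
  ring

lemma not_isUnit_of_eval {f : MvPolynomial (Fin 2) k} {v : Fin 2 → k} (h : eval v f = 0) :
    ¬ IsUnit f := fun hu => (hu.map (eval v)).ne_zero h

/-- A nontrivial zero of `f` yields a linear factor, which is proper because both it and its
cofactor vanish at the origin. -/
lemma eval_ne_zero {f : MvPolynomial (Fin 2) k} (hf : f.IsHomogeneous 3) (hi : Irreducible f)
    {v : Fin 2 → k} (hv : v ≠ 0) : eval v f ≠ 0 := by
  intro h0
  obtain ⟨a, b, c, d, rfl⟩ := cubic_eq hf
  simp at h0
  by_cases hq : v 1 = 0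
  · have hp : v 0 ≠ 0 := by
      intro hp; apply hv; ext j; fin_cases j <;> simp [hp, hq]
    have ha : a = 0 := by simpa [hq, hp] using h0
    have hfac : C a * X 0 ^ 3 + C b * X 0 ^ 2 * X 1 + C c * X 0 * X 1 ^ 2 + C d * X 1 ^ 3
        = (X 1 : MvPolynomial (Fin 2) k) * (C b * X 0 ^ 2 + C c * X 0 * X 1 + C d * X 1 ^ 2) := by
      rw [ha, C_0]; ring
    rcases hi.isUnit_or_isUnit hfac with h | h
    · exact not_isUnit_of_eval (v := 0) (by simp) h
    · exact not_isUnit_of_eval (v := 0) (by simp) h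
  · set t := v 0 / v 1 with ht
    have hv0 : v 0 = t * v 1 := by rw [ht]; field_simp
    have hd : d = -(t * (c + b * t + a * t ^ 2)) := by
      have : v 1 ^ 3 * (d + (t * (c + b * t + a * t ^ 2))) = 0 := by
        rw [hv0] at h0; linear_combination h0
      have := (mul_eq_zero.1 this).resolve_left (pow_ne_zero _ hq)
      linear_combination this
    have hfac : C a * X 0 ^ 3 + C b * X 0 ^ 2 * X 1 + C c * X 0 * X 1 ^ 2 + C d * X 1 ^ 3
        = (X 0 - C t * X 1 : MvPolynomial (Fin 2) k) * (C a * X 0 ^ 2 + C (b + a * t) * X 0 * X 1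
          + C (c + b * t + a * t ^ 2) * X 1 ^ 2) := by
      rw [hd]; simp only [map_add, map_mul, map_neg, map_pow]; ring
    rcases hi.isUnit_or_isUnit hfac with h | h
    · exact not_isUnit_of_eval (v := 0) (by simp) h
    · exact not_isUnit_of_eval (v := 0) (by simp) h

lemma eval_smul {f : MvPolynomial (Fin 2) k} (hf : f.IsHomogeneous 3) (t : k) (v : Fin 2 → k) :
    eval (t • v) f = t ^ 3 * eval v f := by
  obtain ⟨a, b, c, d, rfl⟩ := cubic_eq hf
  simp
  ring

/-- The normal form `w e x³ + w² e y³`. When `w` is a primitive cube root of unity in the field with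
4 elements, it takes the value `e` at every vector with two nonzero coordinates. -/
noncomputable def rep (w e : k) : MvPolynomial (Fin 2) k :=
  C (w * e) * X 0 ^ 3 + C (w ^ 2 * e) * X 1 ^ 3

lemma rep_isHomogeneous (w e : k) : (rep w e).IsHomogeneous 3 :=
  (isHomogeneous_C_mul_X_pow _ _ _).add (isHomogeneous_C_mul_X_pow _ _ _)

variable [Fintype k]

/-! ### The field with four elements -/

lemma cube (hk : Fintype.card k = 4) {x : k} (hx : x ≠ 0) : x ^ 3 = 1 := by
  have := FiniteField.pow_card_sub_one_eq_one x hx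
  rwa [hk] at this

lemma two_eq_zero (hk : Fintype.card k = 4) : (2 : k) = 0 := by
  have : ((Fintype.card k : ℕ) : k) = 0 := FiniteField.cast_card_eq_zero k
  rw [hk] at this
  have h : (2 : k) ^ 2 = 0 := by push_cast at this; linear_combination this
  exact pow_eq_zero_iff (two_ne_zero) |>.1 h

lemma exists_omega (hk : Fintype.card k = 4) : ∃ w : k, w ^ 2 + w + 1 = 0 := by
  classical
  have : ∃ w : k, w ∉ ({0, 1} : Finset k) := by
    by_contra! h
    have := Finset.card_le_card (fun x _ => h x : (Finset.univ : Finset k) ⊆ {0, 1})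
    have h2 := Finset.card_le_two (a := (0 : k)) (b := 1)
    rw [Finset.card_univ] at this
    omega
  obtain ⟨w, hw⟩ := this
  simp at hw
  refine ⟨w, ?_⟩
  have h3 := cube hk hw.1
  have : (w - 1) * (w ^ 2 + w + 1) = 0 := by linear_combination h3
  exact (mul_eq_zero.1 this).resolve_left (sub_ne_zero.2 hw.2)

/-! ### Irreducibility of diagonal cubics -/

/-- As a polynomial in `x` over `k[y]`, this is a unit times the monic cubic `x³ + (b/a) y³`. A root
`p(y)` would give `p(1)³ = -b/a = b/a`, but `b/a` is neither `0` nor `1`, the only cubes in `k`. -/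
lemma binomial_irreducible (hk : Fintype.card k = 4) {a b : k} (ha : a ≠ 0) (hb : b ≠ 0)
    (hab : a ≠ b) : Irreducible (C a * X 0 ^ 3 + C b * X 1 ^ 3 : MvPolynomial (Fin 2) k) := by
  have h2 := two_eq_zero hk
  rw [← MulEquiv.irreducible_iff (finSuccEquiv k 1)]
  have hX : finSuccEquiv k 1 (X 1) = Polynomial.C (X 0) := finSuccEquiv_X_succ (j := 0)
  have e : finSuccEquiv k 1 (C a * X 0 ^ 3 + C b * X 1 ^ 3) =
      Polynomial.C (C a) * (Polynomial.X ^ 3 + Polynomial.C (C (b / a) * X 0 ^ 3)) := by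
    simp only [map_add, map_mul, map_pow, finSuccEquiv_X_zero, hX]
    rw [mul_add, ← mul_assoc, ← Polynomial.C_mul, ← C_mul, mul_div_cancel₀ _ ha]
    simp [finSuccEquiv_apply]
  rw [e, irreducible_isUnit_mul (((Ne.isUnit ha).map C).map Polynomial.C)]
  rw [(Polynomial.monic_X_pow_add_C _ (by norm_num)).irreducible_iff_roots_eq_zero_of_degree_le_three
    (by rw [Polynomial.natDegree_X_pow_add_C]; norm_num)
    (by rw [Polynomial.natDegree_X_pow_add_C])]
  apply Multiset.eq_zero_of_forall_notMem
  intro p hp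
  have hr := Polynomial.isRoot_of_mem_roots hp
  have h1 := congrArg (eval (fun _ => (1 : k))) hr.eq_zero
  simp at h1
  set z := eval (fun _ => (1 : k)) p
  by_cases hz : z = 0
  · simp [hz, ha, hb] at h1
  · rw [cube hk hz] at h1
    field_simp at h1
    exact hab (by linear_combination h1 - b * h2)

/-! ### Fibre sizes of an irreducible cubic form -/

open Classical in
/-- The number of vectors of `k²` at which `f` takes the value `e`. -/
noncomputable def fiberCard (f : MvPolynomial (Fin 2) k) (e : k) : ℕ :=
  (Finset.univ.filter (fun v : Fin 2 → k => eval v f = e)).card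

lemma eq_of_ne_zero (hk : Fintype.card k = 4) {w : k} (hw : w ^ 2 + w + 1 = 0) {e y : k}
    (he : e ≠ 0) (hy : y ≠ 0) : y = e ∨ y = w * e ∨ y = w ^ 2 * e := by
  have h1 := cube hk he
  have h2 := cube hk hy
  have : (y - e) * ((y - w * e) * (y - w ^ 2 * e)) = 0 := by
    linear_combination h2 - h1 + (-e * y ^ 2 + e ^ 2 * y * w - e ^ 3 * (w - 1)) * hw
  rcases mul_eq_zero.1 this with h | h
  · exact Or.inl (sub_eq_zero.1 h)
  · rcases mul_eq_zero.1 h with h | h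
    · exact Or.inr (Or.inl (sub_eq_zero.1 h))
    · exact Or.inr (Or.inr (sub_eq_zero.1 h))

/-- The indicator of `y = e`, for nonzero `y`, is `1 + y/e + (y/e)²`. Summed over `k²` it gives `0`,
and the origin contributes `1`, so the fibre has size `-1 = 1` in `k`. -/
lemma fiberCard_odd (hk : Fintype.card k = 4) {f : MvPolynomial (Fin 2) k}
    (hf : f.IsHomogeneous 3) (hi : Irreducible f) {e : k} (he : e ≠ 0) : Odd (fiberCard f e) := by
  classical
  have h2 := two_eq_zero hk
  have : CharP k 2 := CharTwo.of_one_ne_zero_of_two_eq_zero one_ne_zero h2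
  have hs : ∑ v, eval v f = 0 := by
    apply sum_eval_eq_zero
    have := hf.totalDegree_le
    rw [hk, Fintype.card_fin]
    omega
  have hs2 : ∑ v, (eval v f) ^ 2 = 0 := by
    rw [← sum_pow_char, hs]; simp
  have hpt : ∀ v : Fin 2 → k, 1 + e⁻¹ * eval v f + e⁻¹ ^ 2 * (eval v f) ^ 2 =
      (if eval v f = e then 1 else 0) + (if v = 0 then 1 else 0) := by
    intro v
    by_cases hv : v = 0
    · have h0 : eval v f = 0 := by
        have := eval_smul hf 0 v
        rw [zero_smul] at this
        rw [hv, this]; ring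
      rw [h0, if_neg he.symm, if_pos hv]; ring
    · have h0 := eval_ne_zero hf hi hv
      rw [if_neg hv]
      split_ifs with h
      · rw [h]; field_simp; linear_combination h2
      · have h3 : e⁻¹ * eval v f - 1 ≠ 0 := by
          intro h4
          apply h
          field_simp at h4
          linear_combination h4
        have h5 := cube hk (mul_ne_zero (inv_ne_zero he) h0)
        apply mul_left_cancel₀ h3
        linear_combination h5
  have hsum := Finset.sum_congr (rfl : (Finset.univ : Finset (Fin 2 → k)) = _) (fun v _ => hpt v)
  rw [Finset.sum_add_distrib, Finset.sum_add_distrib, Finset.sum_add_distrib, ← Finset.mul_sum,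
    ← Finset.mul_sum, hs, hs2, Finset.sum_boole, Finset.sum_ite_eq' , if_pos (Finset.mem_univ _),
    Finset.sum_const, Finset.card_univ, card_vec hk] at hsum
  have : ((fiberCard f e + 1 : ℕ) : k) = 0 := by
    push_cast
    unfold fiberCard
    rw [← hsum]
    simp only [nsmul_eq_mul]
    push_cast
    linear_combination 8 * h2
  rw [CharP.cast_eq_zero_iff k 2] at this
  rw [Nat.odd_iff]; omega

/-- Multiplication by `w` has order 3 and acts on the fibre without fixed points. -/
lemma three_dvd_fiberCard (hk : Fintype.card k = 4) {w : k} (hw : w ^ 2 + w + 1 = 0)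
    {f : MvPolynomial (Fin 2) k} (hf : f.IsHomogeneous 3) {e : k} (he : e ≠ 0) :
    3 ∣ fiberCard f e := by
  classical
  have hw3 : w ^ 3 = 1 := by linear_combination (w - 1) * hw
  let φ : Function.End {v : Fin 2 → k // eval v f = e} :=
    fun v => ⟨w • v.1, by rw [eval_smul hf, hw3, one_mul, v.2]⟩
  have hφ : φ ^ 3 ^ 1 = 1 := by
    funext v
    apply Subtype.ext
    change w • w • w • v.1 = v.1
    rw [smul_smul, smul_smul, show w * w * w = w ^ 3 by ring, hw3, one_smul]
  have h := Equiv.Perm.card_fixedPoints_modEq hφ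
  have hempty : Fintype.card φ.fixedPoints = 0 := by
    rw [Fintype.card_eq_zero_iff]
    refine ⟨fun v => ?_⟩
    have hv : w • v.1.1 = v.1.1 := congrArg Subtype.val v.2
    have h3 : v.1.1 = 0 := by
      have h4 : (w - 1) • v.1.1 = 0 := by rw [sub_smul, hv, one_smul, sub_self]
      refine (smul_eq_zero.1 h4).resolve_left ?_
      intro h5
      have : w = 1 := sub_eq_zero.1 h5
      rw [this] at hw
      exact one_ne_zero (α := k) (by linear_combination hw - two_eq_zero hk)
    have h6 := v.1.2
    rw [h3, ← zero_smul k (0 : Fin 2 → k), eval_smul hf] at h6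
    exact he (by rw [← h6]; ring)
  rw [hempty, Fintype.card_subtype] at h
  exact (Nat.modEq_zero_iff_dvd).1 h

lemma fiberCard_sum (hk : Fintype.card k = 4) {w : k} (hw : w ^ 2 + w + 1 = 0)
    {f : MvPolynomial (Fin 2) k} (hf : f.IsHomogeneous 3) (hi : Irreducible f) :
    fiberCard f 1 + fiberCard f w + fiberCard f (w ^ 2) = 15 := by
  classical
  have h2 := two_eq_zero hk
  have h0 : fiberCard f 0 = 1 := by
    unfold fiberCard
    rw [Finset.card_eq_one]
    refine ⟨0, ?_⟩
    ext v
    simp only [Finset.mem_filter, Finset.mem_univ, true_and, Finset.mem_singleton]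
    constructor
    · intro h
      by_contra hv
      exact eval_ne_zero hf hi hv h
    · rintro rfl
      rw [← zero_smul k (0 : Fin 2 → k), eval_smul hf]; ring
  have hw0 : w ≠ 0 := by rintro rfl; simp at hw
  have hw1 : w ≠ 1 := by
    rintro rfl
    exact one_ne_zero (α := k) (by linear_combination hw - h2)
  have hw2 : w ^ 2 ≠ 1 := by
    intro h
    exact hw0 (by linear_combination hw - h - h2)
  have hww : w ≠ w ^ 2 := by
    intro h
    exact one_ne_zero (α := k) (by linear_combination hw + h - w * h2)
  have huniv : (Finset.univ : Finset k) = {0, 1, w, w ^ 2} := by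
    ext y
    simp only [Finset.mem_univ, Finset.mem_insert, Finset.mem_singleton, true_iff]
    by_cases hy : y = 0
    · exact Or.inl hy
    · simpa using Or.inr (eq_of_ne_zero hk hw one_ne_zero hy)
  have hs := Finset.card_eq_sum_card_fiberwise (s := (Finset.univ : Finset (Fin 2 → k)))
    (t := (Finset.univ : Finset k)) (f := fun v => eval v f) (fun _ _ => Finset.mem_coe.2 (Finset.mem_univ _))
  rw [Finset.card_univ, card_vec hk, huniv, Finset.sum_insert, Finset.sum_insert,
    Finset.sum_insert, Finset.sum_singleton] at hs
  · unfold fiberCard at h0 ⊢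
    omega
  · simpa using hww
  · simp [hw1.symm, hw2.symm]
  · simp [hw0.symm, (pow_ne_zero 2 hw0).symm]

/-- A fibre of size 3 is a single punctured line. -/
lemma exists_smul_of_fiberCard (hk : Fintype.card k = 4) {f : MvPolynomial (Fin 2) k}
    (hf : f.IsHomogeneous 3) {e : k} (h3 : fiberCard f e = 3)
    {u x : Fin 2 → k} (hu0 : u ≠ 0) (hu : eval u f = e) (hx : eval x f = e) : ∃ s : k, x = s • u := by
  classical
  have hinj : Function.Injective (fun s : k => s • u) := smul_left_injective k hu0
  have hsub : (Finset.univ.erase (0 : k)).image (fun s => s • u) ⊆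
      Finset.univ.filter (fun v : Fin 2 → k => eval v f = e) := by
    intro v hv
    obtain ⟨s, hs, rfl⟩ := Finset.mem_image.1 hv
    simp only [Finset.mem_filter, Finset.mem_univ, true_and]
    rw [eval_smul hf, cube hk (Finset.ne_of_mem_erase hs), hu, one_mul]
  have heq := Finset.eq_of_subset_of_card_le hsub (by
    rw [Finset.card_image_of_injective _ hinj, Finset.card_erase_of_mem (Finset.mem_univ _),
      Finset.card_univ, hk]
    exact h3.le)
  have hm : x ∈ Finset.univ.filter (fun v : Fin 2 → k => eval v f = e) := by simpa using hx
  rw [← heq] at hm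
  obtain ⟨s, _, hs⟩ := Finset.mem_image.1 hm
  exact ⟨s, hs.symm⟩

/-! ### Reduction to normal form -/

/-- If the values `w e` and `w² e` are each taken exactly three times, vectors `u`, `v` in these
two fibres form a basis in which `f` is the normal form. -/
lemma exists_subst_eq_rep (hk : Fintype.card k = 4) {w : k} (hw : w ^ 2 + w + 1 = 0)
    {f : MvPolynomial (Fin 2) k} (hf : f.IsHomogeneous 3) (hi : Irreducible f) {e : k} (he : e ≠ 0)
    (h1 : fiberCard f (w * e) = 3) (h2 : fiberCard f (w ^ 2 * e) = 3) :
    ∃ A : Matrix (Fin 2) (Fin 2) k, A.det ≠ 0 ∧ subst A f = rep w e := by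
  classical
  have htwo := two_eq_zero hk
  have hw0 : w ≠ 0 := by rintro rfl; simp at hw
  have hww : w * e ≠ w ^ 2 * e := by
    intro h
    have h := mul_right_cancel₀ he h
    exact one_ne_zero (α := k) (by linear_combination hw + h - w * htwo)
  have hz : eval (0 : Fin 2 → k) f = 0 := by
    rw [← zero_smul k (0 : Fin 2 → k), eval_smul hf]; ring
  have ex : ∀ c : k, c ≠ 0 → fiberCard f c = 3 → ∃ u : Fin 2 → k, u ≠ 0 ∧ eval u f = c := by
    intro c hc h
    have : (Finset.univ.filter (fun v : Fin 2 → k => eval v f = c)).Nonempty := by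
      rw [← Finset.card_pos]
      unfold fiberCard at h
      omega
    obtain ⟨u, hu⟩ := this
    have hu : eval u f = c := by simpa using hu
    refine ⟨u, ?_, hu⟩
    rintro rfl
    exact hc (hu ▸ hz)
  obtain ⟨u, hu0, hu⟩ := ex _ (mul_ne_zero hw0 he) h1
  obtain ⟨v, hv0, hv⟩ := ex _ (mul_ne_zero (pow_ne_zero 2 hw0) he) h2
  have hne : ∀ s : k, s • u ≠ v := by
    intro s h
    have h' := eval_smul hf s u
    rw [h, hv, hu] at h'
    by_cases hs : s = 0
    · apply hv0; rw [← h, hs, zero_smul]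
    · rw [cube hk hs, one_mul] at h'
      exact hww h'.symm
  have hind : ∀ a b : k, a • u + b • v = 0 → a = 0 ∧ b = 0 := by
    intro a b h
    have hb : b = 0 := by
      by_contra hb
      apply hne (-(b⁻¹ * a))
      have : b⁻¹ • (a • u + b • v) = 0 := by rw [h, smul_zero]
      rw [smul_add, smul_smul, smul_smul, inv_mul_cancel₀ hb, one_smul] at this
      rw [neg_smul]
      exact neg_eq_of_add_eq_zero_right this
    refine ⟨?_, hb⟩
    rw [hb, zero_smul, add_zero] at h
    exact (smul_eq_zero.1 h).resolve_right hu0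
  let A : Matrix (Fin 2) (Fin 2) k := !![u 0, v 0; u 1, v 1]
  have hA : ∀ r : Fin 2 → k, A.mulVec r = r 0 • u + r 1 • v := by
    intro r
    ext j
    fin_cases j <;> simp [A, Matrix.mulVec, dotProduct, Fin.sum_univ_two] <;> ring
  refine ⟨A, ?_, ?_⟩
  · intro hdet
    obtain ⟨r, hr, hr'⟩ := Matrix.exists_mulVec_eq_zero_iff.2 hdet
    rw [hA] at hr'
    obtain ⟨ha, hb⟩ := hind _ _ hr'
    apply hr
    ext j
    fin_cases j
    · exact ha
    · exact hb
  · refine (isHomogeneous_subst A hf).funext_of_le_card (rep_isHomogeneous w e) ?_ (by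
      rw [Cardinal.mk_fintype, hk]; norm_num)
    intro r
    rw [eval_subst, hA]
    have hrep : eval r (rep w e) = w * e * r 0 ^ 3 + w ^ 2 * e * r 1 ^ 3 := by simp [rep]
    rw [hrep]
    by_cases h0 : r 0 = 0
    · rw [h0, zero_smul, zero_add, eval_smul hf, hv]; ring
    by_cases h1' : r 1 = 0
    · rw [h1', zero_smul, add_zero, eval_smul hf, hu]; ring
    rw [cube hk h0, cube hk h1']
    have hn : r 0 • u + r 1 • v ≠ 0 := fun h => h0 (hind _ _ h).1
    rcases eq_of_ne_zero hk hw he (eval_ne_zero hf hi hn) with h | h | h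
    · rw [h]; linear_combination (-e) * hw + e * htwo
    · obtain ⟨s, hs⟩ := exists_smul_of_fiberCard hk hf h1 hu0 hu h
      exfalso
      apply h1'
      refine (hind (r 0 - s) (r 1) ?_).2
      rw [sub_smul, ← hs]; abel
    · obtain ⟨s, hs⟩ := exists_smul_of_fiberCard hk hf h2 hv0 hv h
      exfalso
      apply h0
      refine (hind (r 0) (r 1 - s) ?_).1
      rw [sub_smul, ← hs]; abel

/-- The three fibre sizes are odd multiples of 3 with sum 15, so two of them are 3; the normal form
is then the one attached to the remaining value. -/
lemma exists_rep (hk : Fintype.card k = 4) {w : k} (hw : w ^ 2 + w + 1 = 0)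
    {f : MvPolynomial (Fin 2) k} (hf : f.IsHomogeneous 3) (hi : Irreducible f) :
    ∃ e : k, e ≠ 0 ∧ ∃ A : Matrix (Fin 2) (Fin 2) k, A.det ≠ 0 ∧ subst A f = rep w e := by
  have hw0 : w ≠ 0 := by rintro rfl; simp at hw
  have hw3 : w ^ 3 = 1 := cube hk hw0
  have hsum := fiberCard_sum hk hw hf hi
  have o1 := fiberCard_odd hk hf hi (one_ne_zero (α := k))
  have o2 := fiberCard_odd hk hf hi hw0
  have o3 := fiberCard_odd hk hf hi (pow_ne_zero 2 hw0)
  have d1 := three_dvd_fiberCard hk hw hf (one_ne_zero (α := k))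
  have d2 := three_dvd_fiberCard hk hw hf hw0
  have d3 := three_dvd_fiberCard hk hw hf (pow_ne_zero 2 hw0)
  rw [Nat.odd_iff] at o1 o2 o3
  have hc : (fiberCard f w = 3 ∧ fiberCard f (w ^ 2) = 3) ∨
      (fiberCard f (w ^ 2) = 3 ∧ fiberCard f 1 = 3) ∨
      (fiberCard f 1 = 3 ∧ fiberCard f w = 3) := by omega
  rcases hc with ⟨ha, hb⟩ | ⟨ha, hb⟩ | ⟨ha, hb⟩
  · exact ⟨1, one_ne_zero, exists_subst_eq_rep hk hw hf hi one_ne_zero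
      (by rwa [mul_one]) (by rwa [mul_one])⟩
  · exact ⟨w, hw0, exists_subst_eq_rep hk hw hf hi hw0
      (by rwa [← sq]) (by rwa [← pow_succ, hw3])⟩
  · exact ⟨w ^ 2, pow_ne_zero 2 hw0, exists_subst_eq_rep hk hw hf hi (pow_ne_zero 2 hw0)
      (by rwa [← pow_succ', hw3])
      (by rwa [show w ^ 2 * w ^ 2 = w ^ 3 * w by ring, hw3, one_mul])⟩

lemma rep_irreducible (hk : Fintype.card k = 4) {w : k} (hw : w ^ 2 + w + 1 = 0) {e : k}
    (he : e ≠ 0) : Irreducible (rep w e) := by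
  have hw0 : w ≠ 0 := by rintro rfl; simp at hw
  refine binomial_irreducible hk (mul_ne_zero hw0 he) (mul_ne_zero (pow_ne_zero 2 hw0) he) ?_
  intro h
  have h := mul_right_cancel₀ he h
  exact one_ne_zero (α := k) (by linear_combination hw + h - w * two_eq_zero hk)

/-- Among the 16 vectors, the 9 off the axes and their 9 images under `A` must overlap; at a common
vector both forms reveal their parameter. -/
lemma rep_injective (hk : Fintype.card k = 4) {w : k} (hw : w ^ 2 + w + 1 = 0) {e e' : k}
    {A : Matrix (Fin 2) (Fin 2) k} (hA : A.det ≠ 0) (h : rep w e' = subst A (rep w e)) :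
    e' = e := by
  classical
  let M : Finset (Fin 2 → k) := Fintype.piFinset (fun _ => Finset.univ.erase 0)
  have hM : M.card = 9 := by
    simp [M, Finset.card_erase_of_mem, hk]
  have hval : ∀ c : k, ∀ v ∈ M, eval v (rep w c) = c := by
    intro c v hv
    have hv' : ∀ i, v i ≠ 0 := by simpa [M] using hv
    simp [rep, cube hk (hv' 0), cube hk (hv' 1)]
    linear_combination c * hw - c * two_eq_zero hk
  have hAinj : Function.Injective A.mulVec :=
    Matrix.mulVec_injective_iff_isUnit.2 ((Matrix.isUnit_iff_isUnit_det A).2 hA.isUnit)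
  have hMA : (M.image A.mulVec).card = 9 := by rw [Finset.card_image_of_injective _ hAinj, hM]
  have hinter : (M.image A.mulVec ∩ M).Nonempty := by
    rw [← Finset.card_pos]
    have h1 := Finset.card_union_add_card_inter (M.image A.mulVec) M
    have h2 := Finset.card_le_univ (M.image A.mulVec ∪ M)
    rw [card_vec hk] at h2
    omega
  obtain ⟨x, hx⟩ := hinter
  rw [Finset.mem_inter, Finset.mem_image] at hx
  obtain ⟨⟨v, hv, rfl⟩, hx⟩ := hx
  rw [← hval e' v hv, h, eval_subst, hval e _ hx]
end

/-! ### Counting the classes -/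

/-- Let `k` be the field with 4 elements. Up to `GL₂(k)`-equivalence
(`g(x,y) = f(a₁₁x + a₁₂y, a₂₁x + a₂₂y)` for an invertible matrix `A`), there are exactly three
equivalence classes of irreducible binary cubic forms over `k`, i.e. homogeneous polynomials
of degree 3 in `k[x,y]` that are irreducible. The classes are counted as the distinct
equivalence classes (subsets of the set of irreducible cubic forms). -/
theorem stmt_12 (k : Type*) [Field k] [Fintype k] (hk : Fintype.card k = 4) :
    Set.ncard {C : Set (MvPolynomial (Fin 2) k) |
      ∃ f : MvPolynomial (Fin 2) k, (f.IsHomogeneous 3 ∧ Irreducible f) ∧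
        C = {g | (g.IsHomogeneous 3 ∧ Irreducible g) ∧
          ∃ A : Matrix (Fin 2) (Fin 2) k, A.det ≠ 0 ∧
            g = MvPolynomial.bind₁
              (fun i => MvPolynomial.C (A i 0) * MvPolynomial.X 0
                + MvPolynomial.C (A i 1) * MvPolynomial.X 1) f}} = 3 := by
  classical
  obtain ⟨w, hw⟩ := exists_omega hk
  let cl : MvPolynomial (Fin 2) k → Set (MvPolynomial (Fin 2) k) := fun f =>
    {g | (g.IsHomogeneous 3 ∧ Irreducible g) ∧
      ∃ A : Matrix (Fin 2) (Fin 2) k, A.det ≠ 0 ∧ g = subst A f}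
  -- `subst` unfolds to the substitution in the statement
  change Set.ncard {C | ∃ f, (f.IsHomogeneous 3 ∧ Irreducible f) ∧ C = cl f} = 3
  have hcl : ∀ (f : MvPolynomial (Fin 2) k) (A : Matrix (Fin 2) (Fin 2) k), A.det ≠ 0 →
      cl f = cl (subst A f) := by
    intro f A hA
    ext g
    refine and_congr_right fun _ => ⟨?_, ?_⟩
    · rintro ⟨B, hB, rfl⟩
      refine ⟨A⁻¹ * B, ?_, ?_⟩
      · rw [Matrix.det_mul]
        exact mul_ne_zero (Matrix.isUnit_nonsing_inv_det A hA.isUnit).ne_zero hB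
      · rw [subst_subst, ← mul_assoc, Matrix.mul_nonsing_inv A hA.isUnit, one_mul]
    · rintro ⟨B, hB, rfl⟩
      exact ⟨A * B, by rw [Matrix.det_mul]; exact mul_ne_zero hA hB, subst_subst A B f⟩
  have himage : {C | ∃ f, (f.IsHomogeneous 3 ∧ Irreducible f) ∧ C = cl f} =
      (fun e => cl (rep w e)) '' ((Finset.univ.erase (0 : k) : Finset k) : Set k) := by
    ext D
    constructor
    · rintro ⟨f, ⟨hf, hi⟩, rfl⟩
      obtain ⟨e, he, A, hA, h⟩ := exists_rep hk hw hf hi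
      exact ⟨e, by simpa using he, by simp only [hcl f A hA, h]⟩
    · rintro ⟨e, he, rfl⟩
      exact ⟨rep w e, ⟨rep_isHomogeneous w e, rep_irreducible hk hw (by simpa using he)⟩, rfl⟩
  rw [himage, Set.InjOn.ncard_image, Set.ncard_coe_finset,
    Finset.card_erase_of_mem (Finset.mem_univ _), Finset.card_univ, hk]
  intro e he e' _ h
  have hmem : rep w e ∈ cl (rep w e) :=
    ⟨⟨rep_isHomogeneous w e, rep_irreducible hk hw (by simpa using he)⟩, 1, by simp,
      (subst_one _).symm⟩
  have h' : cl (rep w e) = cl (rep w e') := h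
  rw [h'] at hmem
  obtain ⟨_, A, hA, hA'⟩ := hmem
  exact rep_injective hk hw hA hA'
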